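/- (Theorem 1, D-bound with power constraint.) For every n ≥ 1, every random vector X in ℝⁿ with (1/n)·E[‖X‖²] ≤ 1, and all 0 < snr ≤ snr0, mmse(X, snr) ≤ mmse(X, snr0) + (n+2)·(1/snr − 1/snr0) − Δ, where Δ = ∫_{snr}^{snr0} dγ/(γ²(1+γ)²) = 2·log((1+snr0)/(1+snr)) − 2·log(snr0/snr) + 1/(1+snr) − 1/(1+snr0) + 1/snr − 1/snr0, and Δ ≥ 0. -/

import Mathlib

open MeasureTheory ProbabilityTheory Real

noncomputable section

/-- The observation `Y_snr = √snr · X + Z` as a random vector in `ℝⁿ` (modeled as `Fin n → ℝ`). -/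
def obs {Ω : Type*} {n : ℕ} (X Z : Ω → Fin n → ℝ) (snr : ℝ) : Ω → Fin n → ℝ :=
  fun ω i => Real.sqrt snr * X ω i + Z ω i

/-- The σ-algebra generated by the observation `Y_snr`. -/
def obsSigma {Ω : Type*} [MeasurableSpace Ω] {n : ℕ} (X Z : Ω → Fin n → ℝ) (snr : ℝ) :
    MeasurableSpace Ω :=
  MeasurableSpace.comap (obs X Z snr) inferInstance

/-- Componentwise conditional expectation of a random vector given a sub-σ-algebra `m`. -/
def ceVec {Ω : Type*} [MeasurableSpace Ω] {n : ℕ} (μ : Measure Ω) (m : MeasurableSpace Ω)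
    (V : Ω → Fin n → ℝ) : Ω → Fin n → ℝ :=
  fun ω i => (μ[fun ω' => V ω' i | m]) ω

/-- `mmse(X, snr) = (1/n) · E[‖X − E[X | Y_snr]‖²]`. -/
def mmseV {Ω : Type*} [MeasurableSpace Ω] {n : ℕ} (μ : Measure Ω) (X Z : Ω → Fin n → ℝ)
    (snr : ℝ) : ℝ :=
  (1 / (n : ℝ)) * ∫ ω, ∑ i, (X ω i - ceVec μ (obsSigma X Z snr) X ω i) ^ 2 ∂μ

section GaussianDensity

/-- The density of `N(0, c²)` with respect to `N(0, 1)`. -/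
def scaleDensity (c x : ℝ) : ℝ := c⁻¹ * Real.exp ((1 - (c ^ 2)⁻¹) * x ^ 2 / 2)

lemma scaleDensity_nonneg {c : ℝ} (hc : 0 < c) (x : ℝ) : 0 ≤ scaleDensity c x := by
  unfold scaleDensity; positivity

@[fun_prop]
lemma measurable_scaleDensity (c : ℝ) : Measurable (scaleDensity c) := by
  unfold scaleDensity; fun_prop

lemma gaussianReal_map_const_mul_eq_withDensity {c : ℝ} (hc : 0 < c) :
    (gaussianReal 0 1).map (c * ·) =
      (gaussianReal 0 1).withDensity (fun x => ENNReal.ofReal (scaleDensity c x)) := by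
  rw [gaussianReal_map_const_mul, mul_zero, mul_one]
  have hv : (NNReal.mk (c ^ 2) (sq_nonneg c)) ≠ 0 := by
    intro h
    have := congrArg NNReal.toReal h
    simp at this
    exact hc.ne' this
  rw [gaussianReal_of_var_ne_zero _ hv, gaussianReal_of_var_ne_zero _ one_ne_zero,
    ← withDensity_mul _ (measurable_gaussianPDF 0 1) (by fun_prop)]
  congr 1
  funext x
  simp only [Pi.mul_apply, gaussianPDF]
  rw [← ENNReal.ofReal_mul (gaussianPDFReal_nonneg _ _ _)]
  congr 1
  simp only [gaussianPDFReal, scaleDensity, NNReal.coe_mk, NNReal.coe_one, sub_zero, mul_one]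
  rw [Real.sqrt_mul (by positivity), Real.sqrt_sq hc.le, mul_inv]
  have h : Real.exp (-x ^ 2 / (2 * c ^ 2)) =
      Real.exp (-x ^ 2 / 2) * Real.exp ((1 - (c ^ 2)⁻¹) * x ^ 2 / 2) := by
    rw [← Real.exp_add]
    congr 1
    field_simp
    ring
  rw [h]
  ring

lemma pi_withDensity_eq {n : ℕ} (ν : Fin n → Measure ℝ) [∀ i, IsProbabilityMeasure (ν i)]
    (f : Fin n → ℝ → ENNReal) (hf : ∀ i, Measurable (f i))
    [∀ i, SigmaFinite ((ν i).withDensity (f i))] :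
    Measure.pi (fun i => (ν i).withDensity (f i)) =
      (Measure.pi ν).withDensity (fun x => ∏ i, f i (x i)) := by
  refine Measure.pi_eq fun s hs => ?_
  rw [withDensity_apply _ (MeasurableSet.univ_pi hs), ← lintegral_indicator (MeasurableSet.univ_pi hs)]
  have hind : ∀ x : Fin n → ℝ, (Set.univ.pi s).indicator (fun x => ∏ i, f i (x i)) x =
      ∏ i, (s i).indicator (f i) (x i) := by
    intro x
    by_cases hx : x ∈ Set.univ.pi s
    · rw [Set.indicator_of_mem hx]
      exact Finset.prod_congr rfl fun i _ => (Set.indicator_of_mem (hx i trivial) _).symm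
    · rw [Set.indicator_of_notMem hx]
      have : ∃ i, x i ∉ s i := by simpa [Set.mem_pi] using hx
      obtain ⟨i, hi⟩ := this
      exact (Finset.prod_eq_zero (Finset.mem_univ i) (Set.indicator_of_notMem hi _)).symm
  simp_rw [hind]
  have hmeas : ∀ i, Measurable ((s i).indicator (f i)) := fun i => (hf i).indicator (hs i)
  rw [lintegral_prod_eq_prod_lintegral_of_indepFun Finset.univ
    (fun i (x : Fin n → ℝ) => (s i).indicator (f i) (x i))
    (iIndepFun_pi fun i => (hmeas i).aemeasurable)
    (fun i => (hmeas i).comp (measurable_pi_apply i))]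
  refine Finset.prod_congr rfl fun i _ => ?_
  rw [(measurePreserving_eval ν i).lintegral_comp (hmeas i), lintegral_indicator (hs i),
    withDensity_apply _ (hs i)]

/-- The density of `N(0, c² Iₙ)` with respect to `N(0, Iₙ)`. -/
def scaleDensityPi {n : ℕ} (c : ℝ) (z : Fin n → ℝ) : ℝ := ∏ i, scaleDensity c (z i)

lemma scaleDensityPi_nonneg {n : ℕ} {c : ℝ} (hc : 0 < c) (z : Fin n → ℝ) :
    0 ≤ scaleDensityPi c z :=
  Finset.prod_nonneg fun i _ => scaleDensity_nonneg hc (z i)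

@[fun_prop]
lemma measurable_scaleDensityPi {n : ℕ} (c : ℝ) :
    Measurable (scaleDensityPi c : (Fin n → ℝ) → ℝ) := by
  unfold scaleDensityPi; fun_prop

lemma pi_gaussianReal_map_const_mul {n : ℕ} {c : ℝ} (hc : 0 < c) :
    (Measure.pi fun _ : Fin n => gaussianReal 0 1).map (fun z i => c * z i) =
      (Measure.pi fun _ : Fin n => gaussianReal 0 1).withDensity
        (fun z => ENNReal.ofReal (scaleDensityPi c z)) := by
  have : ∀ _ : Fin n, IsProbabilityMeasure ((gaussianReal 0 1).map (c * ·)) :=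
    fun _ => Measure.isProbabilityMeasure_map (by fun_prop)
  rw [Measure.pi_map_pi (μ := fun _ : Fin n => gaussianReal 0 1) (f := fun _ x => c * x)
    (fun _ => by fun_prop)]
  rw [gaussianReal_map_const_mul_eq_withDensity hc] at this ⊢
  rw [pi_withDensity_eq (fun _ : Fin n => gaussianReal 0 1)
    (fun _ x => ENNReal.ofReal (scaleDensity c x)) (fun _ => by fun_prop)]
  congr 1
  funext z
  rw [scaleDensityPi, ENNReal.ofReal_prod_of_nonneg fun i _ => scaleDensity_nonneg hc (z i)]

lemma scaleDensityPi_eq {n : ℕ} (c : ℝ) (z : Fin n → ℝ) :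
    scaleDensityPi c z = c⁻¹ ^ n * Real.exp ((1 - (c ^ 2)⁻¹) * (∑ i, z i ^ 2) / 2) := by
  simp only [scaleDensityPi, scaleDensity, Finset.prod_mul_distrib, Finset.prod_const,
    Finset.card_univ, Fintype.card_fin, ← Real.exp_sum, Finset.mul_sum, Finset.sum_div]

lemma exp_mul_le_one_add_mul_add {v b : ℝ} (hv0 : 0 ≤ v) (hv : v ≤ 1 / 8) :
    Real.exp (v * b) ≤ 1 + v * b + 128 * v ^ 2 * Real.exp (|b| / 4) := by
  have h1 : Real.exp (v * b) ≤ 1 + v * b + (v * b) ^ 2 * Real.exp |v * b| := by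
    have h := Complex.norm_exp_sub_sum_le_norm_mul_exp ((v * b : ℝ) : ℂ) 2
    have e : Complex.exp ((v * b : ℝ) : ℂ) -
        ∑ k ∈ Finset.range 2, ((v * b : ℝ) : ℂ) ^ k / (k.factorial : ℂ) =
        ((Real.exp (v * b) - (1 + v * b) : ℝ) : ℂ) := by
      simp [Finset.sum_range_succ]
    rw [e, Complex.norm_real, Complex.norm_real, Real.norm_eq_abs, Real.norm_eq_abs, sq_abs] at h
    linarith [le_of_abs_le h]
  have h2 : |v * b| ≤ |b| / 8 := by
    rw [abs_mul, abs_of_nonneg hv0]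
    nlinarith [abs_nonneg b]
  have h3 : b ^ 2 ≤ 128 * Real.exp (|b| / 8) := by
    have := Real.quadratic_le_exp_of_nonneg (x := |b| / 8) (by positivity)
    have h0 := abs_nonneg b
    have hs := sq_abs b
    nlinarith
  have h4 : Real.exp (|b| / 4) = Real.exp (|b| / 8) * Real.exp (|b| / 8) := by
    rw [← Real.exp_add]; congr 1; ring
  calc _ ≤ _ := h1
    _ ≤ 1 + v * b + (v * b) ^ 2 * Real.exp (|b| / 8) := by gcongr
    _ = 1 + v * b + v ^ 2 * (b ^ 2 * Real.exp (|b| / 8)) := by ring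
    _ ≤ 1 + v * b + v ^ 2 * ((128 * Real.exp (|b| / 8)) * Real.exp (|b| / 8)) := by gcongr
    _ = _ := by rw [h4]; ring

/-- Second-order upper bound for the density of `N(0, c² Iₙ)` with `c² = (1 - v)⁻¹`. -/
lemma scaleDensityPi_le {n : ℕ} {c v : ℝ} (hc : 0 < c) (hcv : (c ^ 2)⁻¹ = 1 - v)
    (hv0 : 0 ≤ v) (hv : v ≤ 1 / 8) (z : Fin n → ℝ) :
    scaleDensityPi c z ≤ 1 + v * ((∑ i, z i ^ 2 - n) / 2) +
      128 * Real.exp (n / 8) * v ^ 2 * Real.exp ((∑ i, z i ^ 2) / 8) := by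
  set S := ∑ i, z i ^ 2 with hS
  have hS0 : 0 ≤ S := Finset.sum_nonneg fun i _ => sq_nonneg _
  have hcinv : c⁻¹ ≤ Real.exp (-v / 2) := by
    refine le_of_sq_le_sq ?_ (Real.exp_pos _).le
    rw [inv_pow, hcv, ← Real.exp_nat_mul]
    have := Real.add_one_le_exp (-v)
    have e : ((2 : ℕ) : ℝ) * (-v / 2) = -v := by push_cast; ring
    rw [e]; linarith
  have h1 : scaleDensityPi c z ≤ Real.exp (v * ((S - n) / 2)) := by
    rw [scaleDensityPi_eq, hcv]
    calc _ ≤ Real.exp (-v / 2) ^ n * Real.exp ((1 - (1 - v)) * S / 2) := by gcongr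
      _ = _ := by rw [← Real.exp_nat_mul, ← Real.exp_add]; congr 1; ring
  refine h1.trans ((exp_mul_le_one_add_mul_add hv0 hv).trans ?_)
  have h2 : |(S - n) / 2| / 4 ≤ n / 8 + S / 8 := by
    have : |(S - n) / 2| ≤ (S + n) / 2 := by
      have hn : (0 : ℝ) ≤ n := Nat.cast_nonneg n
      rw [abs_le]; constructor <;> linarith
    linarith
  have h3 : Real.exp (|(S - n) / 2| / 4) ≤ Real.exp (n / 8) * Real.exp (S / 8) := by
    rw [← Real.exp_add]; exact Real.exp_le_exp.2 h2
  have := mul_le_mul_of_nonneg_left h3 (by positivity : 0 ≤ 128 * v ^ 2)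
  nlinarith

lemma integrable_exp_sum_sq_div_four (n : ℕ) :
    Integrable (fun z : Fin n → ℝ => Real.exp ((∑ i, z i ^ 2) / 4))
      (Measure.pi fun _ : Fin n => gaussianReal 0 1) := by
  set N := Measure.pi fun _ : Fin n => gaussianReal 0 1
  have hc : (0 : ℝ) < Real.sqrt 2 := by positivity
  have hmap := pi_gaussianReal_map_const_mul (n := n) hc
  have : IsProbabilityMeasure (N.map fun z i => Real.sqrt 2 * z i) :=
    Measure.isProbabilityMeasure_map (Measurable.aemeasurable (by fun_prop))
  have h1 : Integrable (fun _ : Fin n → ℝ => (1 : ℝ)) (N.map fun z i => Real.sqrt 2 * z i) :=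
    integrable_const _
  rw [hmap, integrable_withDensity_iff (by fun_prop) (by simp)] at h1
  refine (h1.const_mul (Real.sqrt 2 ^ n)).congr (ae_of_all _ fun z => ?_)
  simp only [one_mul]
  rw [ENNReal.toReal_ofReal (scaleDensityPi_nonneg hc z), scaleDensityPi_eq, ← mul_assoc,
    ← mul_pow, mul_inv_cancel₀ hc.ne', one_pow, one_mul, Real.sq_sqrt (by norm_num)]
  congr 1
  ring

end GaussianDensity

section GaussianMoments

lemma integral_pow_four_gaussianReal : ∫ x, x ^ 4 ∂(gaussianReal 0 1) = 3 := by
  rw [integral_gaussianReal_eq_integral_smul one_ne_zero]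
  have h1 : ∀ x : ℝ, gaussianPDFReal 0 1 x • x ^ 4 =
      (fun y : ℝ => (Real.sqrt (2 * π))⁻¹ * (y ^ (4 : ℝ) * Real.exp (-(1 / 2) * y ^ (2 : ℝ)))) |x| := by
    intro x
    have e4 : |x| ^ (4 : ℝ) = x ^ 4 := by
      rw [show (4 : ℝ) = ((4 : ℕ) : ℝ) by norm_num, Real.rpow_natCast]
      exact (by decide : Even 4).pow_abs x
    have e2 : |x| ^ (2 : ℝ) = x ^ 2 := by
      rw [show (2 : ℝ) = ((2 : ℕ) : ℝ) by norm_num, Real.rpow_natCast, sq_abs]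
    simp only [e4, e2, gaussianPDFReal, smul_eq_mul, NNReal.coe_one, mul_one, sub_zero]
    rw [show -x ^ 2 / 2 = -(1 / 2) * x ^ 2 by ring]
    ring
  simp_rw [h1]
  rw [integral_comp_abs (f := fun y : ℝ => (Real.sqrt (2 * π))⁻¹ *
    (y ^ (4 : ℝ) * Real.exp (-(1 / 2) * y ^ (2 : ℝ)))), integral_const_mul,
    integral_rpow_mul_exp_neg_mul_rpow (by norm_num) (by norm_num) (by norm_num)]
  have hG : Real.Gamma ((4 + 1) / 2) = 3 / 4 * Real.sqrt π := by
    rw [show ((4 : ℝ) + 1) / 2 = (1 / 2 + 1) + 1 by norm_num, Real.Gamma_add_one (by norm_num),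
      Real.Gamma_add_one (by norm_num), Real.Gamma_one_half_eq]
    ring
  have hp : ((1 : ℝ) / 2) ^ (-(4 + 1) / 2 : ℝ) = 4 * Real.sqrt 2 := by
    rw [one_div, Real.inv_rpow (by norm_num), ← Real.rpow_neg (by norm_num),
      show -(-(4 + 1) / 2 : ℝ) = 2 + 1 / 2 by norm_num, Real.rpow_add (by norm_num),
      ← Real.sqrt_eq_rpow]
    norm_num
  rw [hG, hp, Real.sqrt_mul (by norm_num)]
  have h2 : Real.sqrt 2 ≠ 0 := by positivity
  have h3 : Real.sqrt π ≠ 0 := by positivity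
  field_simp

lemma integral_sq_gaussianReal : ∫ x, x ^ 2 ∂(gaussianReal 0 1) = 1 := by
  have h := variance_id_gaussianReal (μ := 0) (v := 1)
  rw [variance_of_integral_eq_zero (by fun_prop) (by simp)] at h
  simpa using h

lemma memLp_sq_gaussianReal : MemLp (fun x : ℝ => x ^ 2) 2 (gaussianReal 0 1) := by
  rw [memLp_two_iff_integrable_sq (by fun_prop)]
  have h := (memLp_id_gaussianReal (μ := 0) (v := 1) 4).integrable_norm_pow (by norm_num)
  refine h.congr (ae_of_all _ fun x => ?_)
  simp only [id, Real.norm_eq_abs]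
  rw [(by decide : Even 4).pow_abs]
  ring

lemma variance_sq_gaussianReal : variance (fun x : ℝ => x ^ 2) (gaussianReal 0 1) = 2 := by
  rw [variance_eq_sub memLp_sq_gaussianReal, integral_sq_gaussianReal]
  have : ∫ x, ((fun x : ℝ => x ^ 2) ^ 2) x ∂(gaussianReal 0 1) = 3 := by
    rw [← integral_pow_four_gaussianReal]
    congr 1; funext x; simp only [Pi.pow_apply]; ring
  rw [this]; norm_num

lemma memLp_eval_pi_gaussianReal {n : ℕ} (i : Fin n) :
    MemLp (fun z : Fin n → ℝ => z i) 4 (Measure.pi fun _ : Fin n => gaussianReal 0 1) :=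
  (memLp_id_gaussianReal (μ := 0) (v := 1) 4).comp_measurePreserving
    (measurePreserving_eval (fun _ : Fin n => gaussianReal 0 1) i)

/-- The fourth moment of the norm of a standard Gaussian vector. -/
lemma integral_sum_sq_sq_pi_gaussianReal (n : ℕ) :
    ∫ z : Fin n → ℝ, (∑ i, z i ^ 2) ^ 2 ∂(Measure.pi fun _ : Fin n => gaussianReal 0 1) =
      n * (n + 2) := by
  set N := Measure.pi fun _ : Fin n => gaussianReal 0 1 with hN
  have hL2 : ∀ i, MemLp (fun z : Fin n → ℝ => z i ^ 2) 2 N := fun i =>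
    memLp_sq_gaussianReal.comp_measurePreserving
      (measurePreserving_eval (fun _ : Fin n => gaussianReal 0 1) i)
  have hvar : variance (∑ i, fun z : Fin n → ℝ => z i ^ 2) N = n * 2 := by
    have := variance_sum_pi (μ := fun _ : Fin n => gaussianReal 0 1)
      (X := fun _ x => x ^ 2) (fun _ => memLp_sq_gaussianReal)
    rw [this, variance_sq_gaussianReal]
    simp
  have hmean : ∫ z, (∑ i, fun z : Fin n → ℝ => z i ^ 2) z ∂N = n := by
    simp only [Finset.sum_apply]
    rw [integral_finsetSum _ fun i _ => (hL2 i).integrable (by norm_num)]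
    have : ∀ i : Fin n, ∫ z : Fin n → ℝ, z i ^ 2 ∂N = 1 := fun i => by
      rw [← integral_sq_gaussianReal]
      exact integral_comp_eval (μ := fun _ : Fin n => gaussianReal 0 1) (f := fun x : ℝ => x ^ 2)
        (by fun_prop)
    simp [this]
  rw [variance_eq_sub (memLp_finsetSum' _ fun i _ => hL2 i), hmean] at hvar
  have e : ∫ z, ((∑ i, fun z : Fin n → ℝ => z i ^ 2) ^ 2) z ∂N =
      ∫ z : Fin n → ℝ, (∑ i, z i ^ 2) ^ 2 ∂N := by
    congr 1; funext z; simp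
  rw [e] at hvar
  linarith

end GaussianMoments

section ConditionalExpectation

variable {Ω : Type*} {m mΩ : MeasurableSpace Ω} {μ : Measure Ω}

lemma memLp_mul_of_memLp_four {f g : Ω → ℝ} (hf : MemLp f 4 μ) (hg : MemLp g 4 μ) :
    MemLp (fun ω => f ω * g ω) 2 μ := by
  have : ENNReal.HolderTriple 4 4 2 := ⟨by
    rw [← two_mul, show (4 : ENNReal) = 2 * 2 by norm_num,
      ENNReal.mul_inv (by simp) (by simp), ← mul_assoc, ENNReal.mul_inv_cancel (by simp) (by simp),
      one_mul]⟩
  exact hg.mul' hf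

lemma memLp_sum_mul_of_memLp_four {n : ℕ} {f g : Fin n → Ω → ℝ} (hf : ∀ i, MemLp (f i) 4 μ)
    (hg : ∀ i, MemLp (g i) 4 μ) : MemLp (fun ω => ∑ i, f i ω * g i ω) 2 μ :=
  memLp_finsetSum _ fun i _ => memLp_mul_of_memLp_four (hf i) (hg i)

variable {n : ℕ} {Z : Ω → Fin n → ℝ}

lemma memLp_two_sum_sub_ceVec_sq (hZ : ∀ i, MemLp (fun ω => Z ω i) 4 μ) :
    MemLp (fun ω => ∑ i, (Z ω i - ceVec μ m Z ω i) ^ 2) 2 μ := by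
  have hz : ∀ i, MemLp (fun ω => Z ω i - ceVec μ m Z ω i) 4 μ :=
    fun i => (hZ i).sub ((hZ i).condExp (by norm_num))
  simpa only [sq] using memLp_sum_mul_of_memLp_four hz hz

lemma memLp_two_sum_sq (hZ : ∀ i, MemLp (fun ω => Z ω i) 4 μ) :
    MemLp (fun ω => ∑ i, Z ω i ^ 2) 2 μ := by
  simpa only [sq] using memLp_sum_mul_of_memLp_four hZ hZ

variable [IsProbabilityMeasure μ]

/-- The residual of a conditional expectation is orthogonal to `m`-measurable functions. -/
lemma integral_mul_sub_condExp_eq_zero (hm : m ≤ mΩ) {f g : Ω → ℝ}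
    (hf : StronglyMeasurable[m] f) (hg : Integrable g μ)
    (hfg : Integrable (fun ω => f ω * g ω) μ)
    (hfe : Integrable (fun ω => f ω * (μ[g | m]) ω) μ) :
    ∫ ω, f ω * (g ω - (μ[g | m]) ω) ∂μ = 0 := by
  have h1 : ∫ ω, f ω * g ω ∂μ = ∫ ω, f ω * (μ[g | m]) ω ∂μ := by
    rw [← integral_condExp hm]
    exact integral_congr_ae (condExp_mul_of_stronglyMeasurable_left hf hfg hg)
  simp_rw [mul_sub]
  rw [integral_sub hfg hfe, h1, sub_self]

/-- The conditional expectation minimizes the mean square error. -/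
lemma integral_sub_condExp_sq_le (hm : m ≤ mΩ) {f g : Ω → ℝ}
    (hf : StronglyMeasurable[m] f) (hf2 : MemLp f 2 μ) (hg : MemLp g 2 μ) :
    ∫ ω, (g ω - (μ[g | m]) ω) ^ 2 ∂μ ≤ ∫ ω, (g ω - f ω) ^ 2 ∂μ := by
  have he : MemLp (μ[g | m]) 2 μ := hg.condExp (by norm_num)
  have hd : MemLp (fun ω => (μ[g | m]) ω - f ω) 2 μ := he.sub hf2
  have hr : MemLp (fun ω => g ω - (μ[g | m]) ω) 2 μ := hg.sub he
  have h0 := integral_mul_sub_condExp_eq_zero hm (f := fun ω => (μ[g | m]) ω - f ω)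
    (stronglyMeasurable_condExp.sub hf) (hg.integrable (by norm_num))
    (hd.integrable_mul hg) (hd.integrable_mul he)
  have hcross : Integrable
      (fun ω => 2 * (((μ[g | m]) ω - f ω) * (g ω - (μ[g | m]) ω))) μ :=
    (hd.integrable_mul hr).const_mul 2
  have hle : ∫ ω, ((g ω - (μ[g | m]) ω) ^ 2 +
      2 * (((μ[g | m]) ω - f ω) * (g ω - (μ[g | m]) ω))) ∂μ ≤ ∫ ω, (g ω - f ω) ^ 2 ∂μ := by
    refine integral_mono (hr.integrable_sq.add hcross) (hg.sub hf2).integrable_sq fun ω => ?_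
    simp only []
    nlinarith [sq_nonneg ((μ[g | m]) ω - f ω)]
  rw [integral_add hr.integrable_sq hcross, integral_const_mul, h0] at hle
  linarith

/-- If `z = E[Z | m]` then `E[‖z‖² ⟨Z, z⟩] = E[‖z‖⁴]`. -/
lemma integral_normSq_mul_inner_sub_eq_zero (hm : m ≤ mΩ) (hZ : ∀ i, MemLp (fun ω => Z ω i) 4 μ) :
    ∫ ω, (∑ i, ceVec μ m Z ω i * ceVec μ m Z ω i) *
      (∑ i, Z ω i * ceVec μ m Z ω i - ∑ i, ceVec μ m Z ω i * ceVec μ m Z ω i) ∂μ = 0 := by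
  have hz : ∀ i, MemLp (fun ω => ceVec μ m Z ω i) 4 μ := fun i => (hZ i).condExp (by norm_num)
  have hzm : ∀ i, StronglyMeasurable[m] (fun ω => ceVec μ m Z ω i) :=
    fun i => stronglyMeasurable_condExp
  have hq := memLp_sum_mul_of_memLp_four hz hz
  have e : ∀ ω, (∑ i, ceVec μ m Z ω i * ceVec μ m Z ω i) *
      (∑ i, Z ω i * ceVec μ m Z ω i - ∑ i, ceVec μ m Z ω i * ceVec μ m Z ω i) =
      ∑ i, ((∑ j, ceVec μ m Z ω j * ceVec μ m Z ω j) * ceVec μ m Z ω i) *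
        (Z ω i - ceVec μ m Z ω i) := by
    intro ω
    rw [← Finset.sum_sub_distrib, Finset.mul_sum]
    exact Finset.sum_congr rfl fun i _ => by ring
  have hint : ∀ (g : Ω → ℝ) (i : Fin n), MemLp g 4 μ → Integrable (fun ω =>
      ((∑ j, ceVec μ m Z ω j * ceVec μ m Z ω j) * ceVec μ m Z ω i) * g ω) μ := by
    intro g i hg
    refine (hq.integrable_mul (memLp_mul_of_memLp_four (hz i) hg)).congr (ae_of_all _ fun ω => ?_)
    simp only [Pi.mul_apply]; ring
  simp_rw [e]
  rw [integral_finsetSum]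
  · refine Finset.sum_eq_zero fun i _ => ?_
    refine integral_mul_sub_condExp_eq_zero hm ?_ ((hZ i).integrable (by norm_num))
      (hint _ i (hZ i)) (hint _ i (hz i))
    exact (Finset.stronglyMeasurable_fun_sum _ fun j _ => (hzm j).mul (hzm j)).mul (hzm i)
  · intro i _
    exact hint _ i ((hZ i).sub (hz i))

lemma sum_sub_sq_eq (a b : Fin n → ℝ) :
    ∑ i, (a i - b i) ^ 2 = ∑ i, a i * a i - 2 * ∑ i, a i * b i + ∑ i, b i * b i := by
  rw [Finset.mul_sum, ← Finset.sum_sub_distrib, ← Finset.sum_add_distrib]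
  exact Finset.sum_congr rfl fun i _ => by ring

lemma inner_sq_le (a b : Fin n → ℝ) :
    (∑ i, a i * b i) ^ 2 ≤ (∑ i, a i * a i) * ∑ i, b i * b i := by
  simpa only [sq] using Finset.sum_mul_sq_le_sq_mul_sq Finset.univ a b

/-- With `z = E[Z | m]`, one has `E[‖Z‖² ‖Z - z‖²] ≤ (4/3) E[‖Z‖⁴]`. -/
lemma integral_normSq_mul_residual_le (hm : m ≤ mΩ) (hZ : ∀ i, MemLp (fun ω => Z ω i) 4 μ) :
    ∫ ω, (∑ i, Z ω i ^ 2) * ∑ i, (Z ω i - ceVec μ m Z ω i) ^ 2 ∂μ ≤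
      4 / 3 * ∫ ω, (∑ i, Z ω i ^ 2) ^ 2 ∂μ := by
  have hz : ∀ i, MemLp (fun ω => ceVec μ m Z ω i) 4 μ := fun i => (hZ i).condExp (by norm_num)
  have hS := memLp_two_sum_sq hZ
  have hq := memLp_sum_mul_of_memLp_four hz hz
  have hA := memLp_sum_mul_of_memLp_four hZ hz
  have h0 := integral_normSq_mul_inner_sub_eq_zero hm hZ
  have hX : Integrable (fun ω => (∑ i, ceVec μ m Z ω i * ceVec μ m Z ω i) *
      (∑ i, Z ω i * ceVec μ m Z ω i - ∑ i, ceVec μ m Z ω i * ceVec μ m Z ω i)) μ :=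
    hq.integrable_mul (hA.sub hq)
  have hle : ∫ ω, (∑ i, Z ω i ^ 2) * ∑ i, (Z ω i - ceVec μ m Z ω i) ^ 2 ∂μ ≤
      ∫ ω, (4 / 3 * (∑ i, Z ω i ^ 2) ^ 2 - 12 * ((∑ i, ceVec μ m Z ω i * ceVec μ m Z ω i) *
        (∑ i, Z ω i * ceVec μ m Z ω i - ∑ i, ceVec μ m Z ω i * ceVec μ m Z ω i))) ∂μ := by
    refine integral_mono (hS.integrable_mul (memLp_two_sum_sub_ceVec_sq hZ))
      ((hS.integrable_sq.const_mul _).sub (hX.const_mul _)) fun ω => ?_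
    simp only []
    have hCS := inner_sq_le (Z ω) (ceVec μ m Z ω)
    rw [sum_sub_sq_eq]
    simp only [sq (Z ω _)]
    set S := ∑ i, Z ω i * Z ω i
    set A := ∑ i, Z ω i * ceVec μ m Z ω i
    set q := ∑ i, ceVec μ m Z ω i * ceVec μ m Z ω i
    nlinarith [sq_nonneg (S + 3 * A - 6 * q)]
  rw [integral_sub (hS.integrable_sq.const_mul _) (hX.const_mul _), integral_const_mul,
    integral_const_mul, h0] at hle
  linarith

/-- With `z = E[Z | m]`, one has `E[‖Z - z‖⁴] ≤ 16 E[‖Z‖⁴]`. -/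
lemma integral_residual_sq_le (hm : m ≤ mΩ) (hZ : ∀ i, MemLp (fun ω => Z ω i) 4 μ) :
    ∫ ω, (∑ i, (Z ω i - ceVec μ m Z ω i) ^ 2) ^ 2 ∂μ ≤ 16 * ∫ ω, (∑ i, Z ω i ^ 2) ^ 2 ∂μ := by
  have hz : ∀ i, MemLp (fun ω => ceVec μ m Z ω i) 4 μ := fun i => (hZ i).condExp (by norm_num)
  have hS := memLp_two_sum_sq hZ
  have hq := memLp_sum_mul_of_memLp_four hz hz
  have hA := memLp_sum_mul_of_memLp_four hZ hz
  have h0 := integral_normSq_mul_inner_sub_eq_zero hm hZ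
  have hX : Integrable (fun ω => (∑ i, ceVec μ m Z ω i * ceVec μ m Z ω i) *
      (∑ i, Z ω i * ceVec μ m Z ω i - ∑ i, ceVec μ m Z ω i * ceVec μ m Z ω i)) μ :=
    hq.integrable_mul (hA.sub hq)
  have hle : ∫ ω, (∑ i, (Z ω i - ceVec μ m Z ω i) ^ 2) ^ 2 ∂μ ≤
      ∫ ω, (16 * (∑ i, Z ω i ^ 2) ^ 2 - 32 * ((∑ i, ceVec μ m Z ω i * ceVec μ m Z ω i) *
        (∑ i, Z ω i * ceVec μ m Z ω i - ∑ i, ceVec μ m Z ω i * ceVec μ m Z ω i))) ∂μ := by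
    refine integral_mono (memLp_two_sum_sub_ceVec_sq hZ).integrable_sq
      ((hS.integrable_sq.const_mul _).sub (hX.const_mul _)) fun ω => ?_
    simp only []
    have hD : 0 ≤ ∑ i, (Z ω i - ceVec μ m Z ω i) ^ 2 := Finset.sum_nonneg fun i _ => sq_nonneg _
    have hD' : 0 ≤ ∑ i, (Z ω i + ceVec μ m Z ω i) ^ 2 := Finset.sum_nonneg fun i _ => sq_nonneg _
    have hq0 : 0 ≤ ∑ i, ceVec μ m Z ω i * ceVec μ m Z ω i :=
      Finset.sum_nonneg fun i _ => mul_self_nonneg _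
    have e' := sum_sub_sq_eq (Z ω) (fun i => -ceVec μ m Z ω i)
    simp only [sub_neg_eq_add, mul_neg, neg_mul, neg_neg, Finset.sum_neg_distrib] at e'
    rw [e'] at hD'
    rw [sum_sub_sq_eq] at hD ⊢
    simp only [sq (Z ω _)]
    set S := ∑ i, Z ω i * Z ω i
    set A := ∑ i, Z ω i * ceVec μ m Z ω i
    set q := ∑ i, ceVec μ m Z ω i * ceVec μ m Z ω i
    have h1 : (S - 2 * A + q) ^ 2 ≤ (2 * S + 2 * q) ^ 2 := by
      apply pow_le_pow_left₀ hD; linarith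
    nlinarith [mul_nonneg hq0 hD, sq_nonneg (S - q)]
  rw [integral_sub (hS.integrable_sq.const_mul _) (hX.const_mul _), integral_const_mul,
    integral_const_mul, h0] at hle
  linarith

end ConditionalExpectation

section Channel

variable {Ω : Type*} [mΩ : MeasurableSpace Ω] {μ : Measure Ω} {n : ℕ} {X Z : Ω → Fin n → ℝ}

/-- The total (unnormalized) mean square error `E[‖X − E[X | Y_snr]‖²]`. -/
def totalError (μ : Measure Ω) (X Z : Ω → Fin n → ℝ) (snr : ℝ) : ℝ :=
  ∫ ω, ∑ i, (X ω i - ceVec μ (obsSigma X Z snr) X ω i) ^ 2 ∂μ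

/-- The squared norm of the error in estimating the noise `Z` from `Y_snr`. -/
def noiseError (μ : Measure Ω) (X Z : Ω → Fin n → ℝ) (snr : ℝ) (ω : Ω) : ℝ :=
  ∑ i, (Z ω i - ceVec μ (obsSigma X Z snr) Z ω i) ^ 2

lemma noiseError_nonneg (snr : ℝ) (ω : Ω) : 0 ≤ noiseError μ X Z snr ω :=
  Finset.sum_nonneg fun _ _ => sq_nonneg _

lemma measurable_obs (hX : Measurable X) (hZ : Measurable Z) (snr : ℝ) :
    Measurable (obs X Z snr) := by
  unfold obs; fun_prop

lemma obsSigma_le (hX : Measurable X) (hZ : Measurable Z) (snr : ℝ) : obsSigma X Z snr ≤ mΩ :=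
  (measurable_obs hX hZ snr).comap_le

lemma memLp_two_of_integrable_sum_sq (hX : Measurable X)
    (hX2 : Integrable (fun ω => ∑ i, (X ω i) ^ 2) μ) (i : Fin n) :
    MemLp (fun ω => X ω i) 2 μ := by
  rw [memLp_two_iff_integrable_sq (by fun_prop)]
  refine hX2.mono' (by fun_prop) (ae_of_all _ fun ω => ?_)
  rw [Real.norm_of_nonneg (sq_nonneg _)]
  exact Finset.single_le_sum (f := fun i => X ω i ^ 2) (fun j _ => sq_nonneg _) (Finset.mem_univ i)

lemma memLp_four_of_map_eq (hZ : Measurable Z)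
    (hZlaw : Measure.map Z μ = Measure.pi fun _ : Fin n => gaussianReal 0 1) (i : Fin n) :
    MemLp (fun ω => Z ω i) 4 μ :=
  (memLp_eval_pi_gaussianReal i).comp_measurePreserving ⟨hZ, hZlaw⟩

variable [IsProbabilityMeasure μ]

/-- Estimating `X` is equivalent to estimating the noise `Z`. -/
lemma totalError_eq (hX : Measurable X) (hZ : Measurable Z)
    (hX1 : ∀ i, Integrable (fun ω => X ω i) μ) (hZ1 : ∀ i, Integrable (fun ω => Z ω i) μ)
    {snr : ℝ} (hsnr : 0 < snr) :
    totalError μ X Z snr = snr⁻¹ * ∫ ω, noiseError μ X Z snr ω ∂μ := by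
  have hm := obsSigma_le hX hZ snr
  have hs : 0 < Real.sqrt snr := Real.sqrt_pos.2 hsnr
  have hkey : ∀ i, ∀ᵐ ω ∂μ, Z ω i - ceVec μ (obsSigma X Z snr) Z ω i =
      -Real.sqrt snr * (X ω i - ceVec μ (obsSigma X Z snr) X ω i) := by
    intro i
    have hYm : StronglyMeasurable[obsSigma X Z snr] (fun ω => obs X Z snr ω i) := by
      have h : Measurable[obsSigma X Z snr] (obs X Z snr) := comap_measurable _
      exact ((measurable_pi_apply i).comp h).stronglyMeasurable
    have hY1 : Integrable (fun ω => obs X Z snr ω i) μ := ((hX1 i).const_mul _).add (hZ1 i)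
    have h1 : μ[fun ω => Z ω i | obsSigma X Z snr] =ᵐ[μ]
        (fun ω => obs X Z snr ω i) - Real.sqrt snr • μ[fun ω => X ω i | obsSigma X Z snr] := by
      have e : (fun ω => Z ω i) =
          (fun ω => obs X Z snr ω i) - Real.sqrt snr • (fun ω => X ω i) := by
        funext ω; simp [obs]
      have h2 := condExp_sub hY1 ((hX1 i).smul (Real.sqrt snr)) (obsSigma X Z snr)
      rw [condExp_of_stronglyMeasurable hm hYm hY1] at h2
      rw [e]
      refine h2.trans ?_
      filter_upwards [condExp_smul (Real.sqrt snr) (fun ω => X ω i) (obsSigma X Z snr)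
        (μ := μ)] with ω hω
      simp only [Pi.sub_apply, hω]
    filter_upwards [h1] with ω hω
    simp only [ceVec, hω, Pi.sub_apply, Pi.smul_apply, smul_eq_mul, obs]
    ring
  rw [totalError, ← integral_const_mul]
  refine integral_congr_ae ?_
  filter_upwards [ae_all_iff.2 hkey] with ω hω
  simp only [noiseError, hω, mul_pow, neg_sq, Real.sq_sqrt hsnr.le, ← Finset.mul_sum]
  rw [inv_mul_cancel_left₀ hsnr.ne']

/-- Rescaling the noise amounts to a change of density. -/
lemma map_prod_scale_eq_withDensity (hX : Measurable X) (hZ : Measurable Z)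
    (hZlaw : Measure.map Z μ = Measure.pi fun _ : Fin n => gaussianReal 0 1)
    (hindep : IndepFun X Z μ) {c : ℝ} (hc : 0 < c) :
    μ.map (fun ω => (X ω, fun i => c * Z ω i)) =
      (μ.map fun ω => (X ω, Z ω)).withDensity
        (fun p => ENNReal.ofReal (scaleDensityPi c p.2)) := by
  have : IsProbabilityMeasure (μ.map X) := Measure.isProbabilityMeasure_map hX.aemeasurable
  have hscale : Measurable fun (z : Fin n → ℝ) (i : Fin n) => c * z i := by fun_prop
  have h1 := (indepFun_iff_map_prod_eq_prod_map_map hX.aemeasurable hZ.aemeasurable).1 hindep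
  have h2 : μ.map (fun ω => (X ω, fun i => c * Z ω i)) =
      (μ.map fun ω => (X ω, Z ω)).map (Prod.map id fun z i => c * z i) := by
    rw [Measure.map_map (by fun_prop) (by fun_prop)]
    rfl
  rw [h2, h1, hZlaw, ← Measure.map_prod_map _ _ measurable_id hscale, Measure.map_id,
    pi_gaussianReal_map_const_mul hc, prod_withDensity_right (by fun_prop)]

/-- Using the rescaled optimal estimator at `γ` as an estimator at `γ' = γ / c²`. -/
lemma totalError_le_of_integrable (hX : Measurable X) (hZ : Measurable Z)
    (hZlaw : Measure.map Z μ = Measure.pi fun _ : Fin n => gaussianReal 0 1)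
    (hindep : IndepFun X Z μ) (hX2 : ∀ i, MemLp (fun ω => X ω i) 2 μ)
    {γ γ' c : ℝ} (hγ : 0 < γ) (hc : 0 < c) (hcγ : c * Real.sqrt γ' = Real.sqrt γ)
    (hint : Integrable (fun ω => scaleDensityPi c (Z ω) * noiseError μ X Z γ ω) μ) :
    totalError μ X Z γ' ≤ γ⁻¹ * ∫ ω, scaleDensityPi c (Z ω) * noiseError μ X Z γ ω ∂μ := by
  have hs : 0 < Real.sqrt γ := Real.sqrt_pos.2 hγ
  have hfac : ∀ i, ∃ h : (Fin n → ℝ) → ℝ, StronglyMeasurable h ∧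
      (fun ω => ceVec μ (obsSigma X Z γ) Z ω i) = h ∘ obs X Z γ := fun i =>
    StronglyMeasurable.exists_eq_measurable_comp stronglyMeasurable_condExp
  choose ζ hζm hζ using hfac
  have hζm' : ∀ i, Measurable (ζ i) := fun i => (hζm i).measurable
  have hζ' : ∀ i ω, ceVec μ (obsSigma X Z γ) Z ω i = ζ i (obs X Z γ ω) :=
    fun i ω => congrFun (hζ i) ω
  let Φ : (Fin n → ℝ) × (Fin n → ℝ) → ℝ :=
    fun p => ∑ i, (p.2 i - ζ i (fun j => Real.sqrt γ * p.1 j + p.2 j)) ^ 2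
  have hΦ : Measurable Φ := by fun_prop
  have hΦD : ∀ ω, Φ (X ω, Z ω) = noiseError μ X Z γ ω := fun ω => by
    simp only [Φ, noiseError, hζ']; rfl
  have hmap := map_prod_scale_eq_withDensity hX hZ hZlaw hindep hc
  have hXcZ : Measurable fun ω => (X ω, fun i => c * Z ω i) := by fun_prop
  have hXZ : Measurable fun ω => (X ω, Z ω) := by fun_prop
  have hdens : Measurable fun p : (Fin n → ℝ) × (Fin n → ℝ) => scaleDensityPi c p.2 := by fun_prop
  have hint' : Integrable (fun ω => Φ (X ω, fun i => c * Z ω i)) μ := by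
    have : Integrable Φ (μ.map fun ω => (X ω, fun i => c * Z ω i)) := by
      rw [hmap, integrable_withDensity_iff hdens.ennreal_ofReal (by simp),
        integrable_map_measure (by fun_prop) hXZ.aemeasurable]
      refine hint.congr (ae_of_all _ fun ω => ?_)
      simp only [Function.comp, hΦD, ENNReal.toReal_ofReal (scaleDensityPi_nonneg hc _)]
      ring
    exact (integrable_map_measure hΦ.aestronglyMeasurable hXcZ.aemeasurable).1 this
  have hval : ∫ ω, Φ (X ω, fun i => c * Z ω i) ∂μ =
      ∫ ω, scaleDensityPi c (Z ω) * noiseError μ X Z γ ω ∂μ := by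
    rw [← integral_map (f := Φ) hXcZ.aemeasurable hΦ.aestronglyMeasurable, hmap,
      integral_withDensity_eq_integral_toReal_smul hdens.ennreal_ofReal (by simp),
      integral_map hXZ.aemeasurable (by fun_prop)]
    refine integral_congr_ae (ae_of_all _ fun ω => ?_)
    simp only [hΦD, ENNReal.toReal_ofReal (scaleDensityPi_nonneg hc _), smul_eq_mul]
  let g : Fin n → (Fin n → ℝ) → ℝ := fun i y =>
    (Real.sqrt γ)⁻¹ * (c * y i - ζ i (fun j => c * y j))
  have hgm : ∀ i, Measurable (g i) := fun i => by fun_prop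
  have hres : ∀ i ω, X ω i - g i (obs X Z γ' ω) =
      -(Real.sqrt γ)⁻¹ * (c * Z ω i - ζ i (fun j => Real.sqrt γ * X ω j + c * Z ω j)) := by
    intro i ω
    simp only [g, obs, mul_add, ← mul_assoc, hcγ]
    field_simp
    ring
  have hsum : ∀ ω, ∑ i, (X ω i - g i (obs X Z γ' ω)) ^ 2 =
      γ⁻¹ * Φ (X ω, fun i => c * Z ω i) := by
    intro ω
    simp only [hres, mul_pow, neg_sq, inv_pow, Real.sq_sqrt hγ.le, Φ, Finset.mul_sum]
  have hY := measurable_obs hX hZ γ'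
  have hresL2 : ∀ i, MemLp (fun ω => X ω i - g i (obs X Z γ' ω)) 2 μ := by
    intro i
    have hmeas : Measurable fun ω => X ω i - g i (obs X Z γ' ω) :=
      (measurable_pi_apply i |>.comp hX).sub ((hgm i).comp hY)
    rw [memLp_two_iff_integrable_sq hmeas.aestronglyMeasurable]
    refine (hint'.const_mul γ⁻¹).mono' (hmeas.pow_const 2).aestronglyMeasurable
      (ae_of_all _ fun ω => ?_)
    rw [Real.norm_of_nonneg (sq_nonneg _), ← hsum]
    exact Finset.single_le_sum (f := fun i => (X ω i - g i (obs X Z γ' ω)) ^ 2)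
      (fun j _ => sq_nonneg _) (Finset.mem_univ i)
  have hgL2 : ∀ i, MemLp (fun ω => g i (obs X Z γ' ω)) 2 μ := fun i => by
    have h := (hX2 i).sub (hresL2 i)
    have e : ((fun ω => X ω i) - fun ω => X ω i - g i (obs X Z γ' ω)) =
        fun ω => g i (obs X Z γ' ω) := by
      funext ω
      simp only [Pi.sub_apply, sub_sub_cancel]
    rwa [e] at h
  have hce : ∀ i, Integrable
      (fun ω => (X ω i - ceVec μ (obsSigma X Z γ') X ω i) ^ 2) μ := fun i =>
    ((hX2 i).sub ((hX2 i).condExp (by norm_num))).integrable_sq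
  rw [← hval, ← integral_const_mul]
  simp_rw [← hsum]
  rw [totalError, integral_finsetSum _ fun i _ => (hresL2 i).integrable_sq,
    integral_finsetSum _ fun i _ => hce i]
  refine Finset.sum_le_sum fun i _ => ?_
  refine integral_sub_condExp_sq_le (obsSigma_le hX hZ γ') ?_ (hgL2 i) (hX2 i)
  have h : Measurable[obsSigma X Z γ'] (obs X Z γ') := comap_measurable _
  exact ((hgm i).comp h).stronglyMeasurable

/-- One-step estimate: the error grows at most at rate `(2/3) n (n + 2)` in `1 / snr`, up to a
uniform quadratic term. -/
lemma exists_totalError_step_le (hX : Measurable X) (hZ : Measurable Z)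
    (hZlaw : Measure.map Z μ = Measure.pi fun _ : Fin n => gaussianReal 0 1)
    (hindep : IndepFun X Z μ) (hX2 : ∀ i, MemLp (fun ω => X ω i) 2 μ) :
    ∃ C : ℝ, 0 ≤ C ∧ ∀ γ v : ℝ, 0 < γ → 0 ≤ v → v ≤ 1 / 8 →
      totalError μ X Z (γ * (1 - v)) ≤ totalError μ X Z γ +
        γ⁻¹ * (v * (2 / 3 * n * (n + 2)) + v ^ 2 * C) := by
  have hZ4 := memLp_four_of_map_eq hZ hZlaw
  have hS := memLp_two_sum_sq hZ4
  have hS2 : ∫ ω, (∑ i, Z ω i ^ 2) ^ 2 ∂μ = n * (n + 2) := by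
    rw [← integral_sum_sq_sq_pi_gaussianReal n, ← hZlaw,
      integral_map hZ.aemeasurable (Measurable.aestronglyMeasurable (by fun_prop))]
  have hE4 : Integrable (fun ω => Real.exp ((∑ i, Z ω i ^ 2) / 4)) μ := by
    have h := integrable_exp_sum_sq_div_four n
    rw [← hZlaw, integrable_map_measure (Measurable.aestronglyMeasurable (by fun_prop))
      hZ.aemeasurable] at h
    exact h
  have hE : MemLp (fun ω => Real.exp ((∑ i, Z ω i ^ 2) / 8)) 2 μ := by
    rw [memLp_two_iff_integrable_sq (by fun_prop)]
    refine hE4.congr (ae_of_all _ fun ω => ?_)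
    simp only [← Real.exp_nat_mul]
    congr 1
    push_cast
    ring
  set M := ∫ ω, Real.exp ((∑ i, Z ω i ^ 2) / 8) ^ 2 ∂μ with hM
  have hM0 : 0 ≤ M := integral_nonneg fun ω => sq_nonneg _
  refine ⟨128 * Real.exp (n / 8) * (16 * (n * (n + 2)) + M), by positivity, ?_⟩
  intro γ v hγ hv0 hv
  have hv1 : 0 < 1 - v := by linarith
  set c := Real.sqrt (1 - v)⁻¹ with hcdef
  have hc : 0 < c := Real.sqrt_pos.2 (inv_pos.2 hv1)
  have hc2 : (c ^ 2)⁻¹ = 1 - v := by rw [Real.sq_sqrt (inv_pos.2 hv1).le, inv_inv]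
  have hcγ : c * Real.sqrt (γ * (1 - v)) = Real.sqrt γ := by
    rw [hcdef, ← Real.sqrt_mul (inv_pos.2 hv1).le]
    congr 1
    field_simp
  have hm := obsSigma_le hX hZ γ
  have hD : MemLp (noiseError μ X Z γ) 2 μ := memLp_two_sum_sub_ceVec_sq hZ4
  have hD1 : Integrable (noiseError μ X Z γ) μ := hD.integrable (by norm_num)
  have hSD : Integrable (fun ω => (∑ i, Z ω i ^ 2) * noiseError μ X Z γ ω) μ :=
    hS.integrable_mul hD
  have hED : Integrable (fun ω => Real.exp ((∑ i, Z ω i ^ 2) / 8) * noiseError μ X Z γ ω) μ :=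
    hE.integrable_mul hD
  set K := 128 * Real.exp (n / 8) with hK
  have hK0 : 0 ≤ K := by positivity
  have hB1 : Integrable (fun ω => (1 - v * n / 2) * noiseError μ X Z γ ω +
      (v / 2) * ((∑ i, Z ω i ^ 2) * noiseError μ X Z γ ω)) μ :=
    (hD1.const_mul _).add (hSD.const_mul _)
  have hB : Integrable (fun ω => (1 - v * n / 2) * noiseError μ X Z γ ω +
      (v / 2) * ((∑ i, Z ω i ^ 2) * noiseError μ X Z γ ω) +
      K * v ^ 2 * (Real.exp ((∑ i, Z ω i ^ 2) / 8) * noiseError μ X Z γ ω)) μ :=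
    hB1.add (hED.const_mul _)
  have hpt : ∀ ω, scaleDensityPi c (Z ω) * noiseError μ X Z γ ω ≤
      (1 - v * n / 2) * noiseError μ X Z γ ω +
      (v / 2) * ((∑ i, Z ω i ^ 2) * noiseError μ X Z γ ω) +
      K * v ^ 2 * (Real.exp ((∑ i, Z ω i ^ 2) / 8) * noiseError μ X Z γ ω) := by
    intro ω
    refine (mul_le_mul_of_nonneg_right (scaleDensityPi_le hc hc2 hv0 hv (Z ω))
      (noiseError_nonneg γ ω)).trans_eq ?_
    ring
  have hint : Integrable (fun ω => scaleDensityPi c (Z ω) * noiseError μ X Z γ ω) μ := by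
    refine hB.mono' ?_ (ae_of_all _ fun ω => ?_)
    · exact (((measurable_scaleDensityPi c).comp hZ).aestronglyMeasurable).mul
        hD.aestronglyMeasurable
    · rw [Real.norm_of_nonneg (mul_nonneg (scaleDensityPi_nonneg hc _) (noiseError_nonneg γ ω))]
      exact hpt ω
  have h1 := totalError_le_of_integrable hX hZ hZlaw hindep hX2 hγ hc hcγ hint
  have h2 : ∫ ω, scaleDensityPi c (Z ω) * noiseError μ X Z γ ω ∂μ ≤
      (1 - v * n / 2) * ∫ ω, noiseError μ X Z γ ω ∂μ +
      (v / 2) * ∫ ω, (∑ i, Z ω i ^ 2) * noiseError μ X Z γ ω ∂μ +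
      K * v ^ 2 * ∫ ω, Real.exp ((∑ i, Z ω i ^ 2) / 8) * noiseError μ X Z γ ω ∂μ := by
    have := integral_mono hint hB hpt
    rwa [integral_add hB1 (hED.const_mul _),
      integral_add (hD1.const_mul _) (hSD.const_mul _), integral_const_mul, integral_const_mul,
      integral_const_mul] at this
  have h3 : ∫ ω, (∑ i, Z ω i ^ 2) * noiseError μ X Z γ ω ∂μ ≤ 4 / 3 * (n * (n + 2)) :=
    hS2 ▸ integral_normSq_mul_residual_le hm hZ4
  have h4 : ∫ ω, noiseError μ X Z γ ω ^ 2 ∂μ ≤ 16 * (n * (n + 2)) :=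
    hS2 ▸ integral_residual_sq_le hm hZ4
  have h5 : ∫ ω, Real.exp ((∑ i, Z ω i ^ 2) / 8) * noiseError μ X Z γ ω ∂μ ≤
      16 * (n * (n + 2)) + M := by
    have : ∫ ω, Real.exp ((∑ i, Z ω i ^ 2) / 8) * noiseError μ X Z γ ω ∂μ ≤
        ∫ ω, (noiseError μ X Z γ ω ^ 2 + Real.exp ((∑ i, Z ω i ^ 2) / 8) ^ 2) ∂μ := by
      refine integral_mono hED (hD.integrable_sq.add hE.integrable_sq) fun ω => ?_
      simp only []
      nlinarith [sq_nonneg (noiseError μ X Z γ ω - Real.exp ((∑ i, Z ω i ^ 2) / 8)),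
        sq_nonneg (noiseError μ X Z γ ω), sq_nonneg (Real.exp ((∑ i, Z ω i ^ 2) / 8))]
    rw [integral_add hD.integrable_sq hE.integrable_sq] at this
    linarith
  have h6 : 0 ≤ ∫ ω, noiseError μ X Z γ ω ∂μ := integral_nonneg (noiseError_nonneg γ)
  rw [totalError_eq hX hZ (fun i => (hX2 i).integrable (by norm_num))
    (fun i => (hZ4 i).integrable (by norm_num)) hγ]
  refine h1.trans ?_
  rw [← mul_add]
  refine mul_le_mul_of_nonneg_left ?_ (inv_pos.2 hγ).le
  have h7 : 0 ≤ v * n / 2 * ∫ ω, noiseError μ X Z γ ω ∂μ := by positivity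
  have h8 := mul_le_mul_of_nonneg_left h3 (by positivity : 0 ≤ v / 2)
  have h9 := mul_le_mul_of_nonneg_left h5 (by positivity : 0 ≤ K * v ^ 2)
  linarith

end Channel

section Integration

/-- A function whose increments in `t` are controlled to second order by `K` grows at most at
rate `K`. -/
lemma le_add_of_forall_step_le {f : ℝ → ℝ} {a b K C η : ℝ} (hab : a ≤ b) (hη : 0 < η)
    (hstep : ∀ t δ, a ≤ t → 0 ≤ δ → δ ≤ η → f (t + δ) ≤ f t + (K * δ + C * δ ^ 2)) :
    f b ≤ f a + K * (b - a) := by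
  have hbound : ∀ N : ℕ, 0 < N → (b - a) / N ≤ η →
      f b ≤ f a + K * (b - a) + C * (b - a) ^ 2 / N := by
    intro N hN hδ
    have hN' : (0 : ℝ) < N := Nat.cast_pos.2 hN
    set δ := (b - a) / N with hδdef
    have hδ0 : 0 ≤ δ := div_nonneg (sub_nonneg.2 hab) hN'.le
    have hind : ∀ k : ℕ, f (a + k * δ) ≤ f a + k * (K * δ + C * δ ^ 2) := by
      intro k
      induction k with
      | zero => simp
      | succ k ih =>
        have h := hstep (a + k * δ) δ (le_add_of_nonneg_right (by positivity)) hδ0 hδ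
        have e : a + ((k + 1 : ℕ) : ℝ) * δ = a + k * δ + δ := by push_cast; ring
        rw [e]
        push_cast
        linarith
    have h := hind N
    have e : (N : ℝ) * δ = b - a := by rw [hδdef]; field_simp
    have e' : (N : ℝ) * (K * δ + C * δ ^ 2) = K * (b - a) + C * (b - a) ^ 2 / N := by
      rw [hδdef]; field_simp
    rw [e, e', add_sub_cancel] at h
    linarith
  have hlim : Filter.Tendsto (fun N : ℕ => f a + K * (b - a) + C * (b - a) ^ 2 / N) Filter.atTop
      (nhds (f a + K * (b - a))) := by
    simpa using (tendsto_const_div_atTop_nhds_zero_nat (C * (b - a) ^ 2)).const_add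
      (f a + K * (b - a))
  refine ge_of_tendsto hlim ?_
  filter_upwards [Filter.eventually_gt_atTop 0,
    (tendsto_const_div_atTop_nhds_zero_nat (b - a)).eventually_le_const hη] with N hN hN'
  exact hbound N hN hN'

lemma totalError_le {Ω : Type*} [MeasurableSpace Ω] {μ : Measure Ω} [IsProbabilityMeasure μ]
    {n : ℕ} {X Z : Ω → Fin n → ℝ} (hX : Measurable X) (hZ : Measurable Z)
    (hZlaw : Measure.map Z μ = Measure.pi fun _ : Fin n => gaussianReal 0 1)
    (hindep : IndepFun X Z μ) (hX2 : ∀ i, MemLp (fun ω => X ω i) 2 μ)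
    {snr snr0 : ℝ} (hsnr : 0 < snr) (hle : snr ≤ snr0) :
    totalError μ X Z snr ≤
      totalError μ X Z snr0 + 2 / 3 * n * (n + 2) * (1 / snr - 1 / snr0) := by
  obtain ⟨C, hC, hstep⟩ := exists_totalError_step_le hX hZ hZlaw hindep hX2
  have h0 : 0 < snr0 := hsnr.trans_le hle
  have ha : 0 < 1 / snr0 := by positivity
  have hK : (0 : ℝ) ≤ 2 / 3 * n * (n + 2) := by positivity
  have h := le_add_of_forall_step_le (f := fun t => totalError μ X Z t⁻¹) (a := 1 / snr0)
    (b := 1 / snr) (K := 2 / 3 * n * (n + 2)) (C := C * snr0) (η := 1 / snr0 / 8)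
    (one_div_le_one_div_of_le hsnr hle) (by positivity) ?_
  · simpa using h
  intro t δ hat hδ0 hδ
  have ht : 0 < t := ha.trans_le hat
  have htδ : 0 < t + δ := by linarith
  have hv : δ / (t + δ) ≤ 1 / 8 := by
    rw [div_le_iff₀ htδ]
    linarith
  have hs := hstep t⁻¹ (δ / (t + δ)) (inv_pos.2 ht) (by positivity) hv
  have e : t⁻¹ * (1 - δ / (t + δ)) = (t + δ)⁻¹ := by
    field_simp
    ring
  rw [e, inv_inv] at hs
  refine hs.trans (add_le_add_right ?_ _)
  have h1 : t * (δ / (t + δ)) ≤ δ := by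
    rw [mul_div_assoc', div_le_iff₀ htδ]
    nlinarith
  have h2 : δ / (t + δ) ≤ snr0 * δ := by
    rw [div_le_iff₀ htδ]
    have : 1 ≤ snr0 * (t + δ) := by
      have := mul_le_mul_of_nonneg_left (hat.trans (le_add_of_nonneg_right hδ0)) h0.le
      rwa [mul_one_div_cancel h0.ne'] at this
    nlinarith
  have h3 : t * (δ / (t + δ)) * (δ / (t + δ)) ≤ δ * (snr0 * δ) :=
    mul_le_mul h1 h2 (by positivity) hδ0
  nlinarith [mul_le_mul_of_nonneg_left h1 hK, mul_le_mul_of_nonneg_left h3 hC]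

lemma integral_one_div_sq_mul_sq {a b : ℝ} (ha : 0 < a) (hab : a ≤ b) :
    ∫ γ in a..b, 1 / (γ ^ 2 * (1 + γ) ^ 2) =
      2 * Real.log ((1 + b) / (1 + a)) - 2 * Real.log (b / a)
        + 1 / (1 + a) - 1 / (1 + b) + 1 / a - 1 / b := by
  have hpos : ∀ x ∈ Set.uIcc a b, 0 < x := fun x hx => by
    rw [Set.uIcc_of_le hab] at hx
    exact ha.trans_le hx.1
  have hderiv : ∀ x ∈ Set.uIcc a b,
      HasDerivAt (fun γ => 2 * Real.log (1 + γ) - 2 * Real.log γ - (1 + γ)⁻¹ - γ⁻¹)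
        (1 / (x ^ 2 * (1 + x) ^ 2)) x := by
    intro x hx
    have hx0 := hpos x hx
    have hx1 : 0 < 1 + x := by linarith
    have h1 : HasDerivAt (fun γ : ℝ => 1 + γ) 1 x := (hasDerivAt_id x).const_add 1
    refine ((((h1.log hx1.ne').const_mul 2).sub ((Real.hasDerivAt_log hx0.ne').const_mul 2)).sub
      (h1.inv hx1.ne')).sub (hasDerivAt_inv hx0.ne') |>.congr_deriv ?_
    field_simp
    ring
  have hcont : ContinuousOn (fun γ : ℝ => 1 / (γ ^ 2 * (1 + γ) ^ 2)) (Set.uIcc a b) := by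
    refine ContinuousOn.div (by fun_prop) (by fun_prop) fun x hx => ?_
    have := hpos x hx
    positivity
  rw [intervalIntegral.integral_eq_sub_of_hasDerivAt hderiv hcont.intervalIntegrable]
  have hb : 0 < b := ha.trans_le hab
  rw [Real.log_div (by positivity) (by positivity), Real.log_div hb.ne' ha.ne']
  simp only [one_div]
  ring

lemma integral_one_div_sq_mul_sq_le {a b : ℝ} (ha : 0 < a) (hab : a ≤ b) :
    ∫ γ in a..b, 1 / (γ ^ 2 * (1 + γ) ^ 2) ≤ 1 / a - 1 / b := by
  have hpos : ∀ x ∈ Set.uIcc a b, 0 < x := fun x hx => by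
    rw [Set.uIcc_of_le hab] at hx
    exact ha.trans_le hx.1
  have hcont : ContinuousOn (fun γ : ℝ => 1 / (γ ^ 2 * (1 + γ) ^ 2)) (Set.uIcc a b) := by
    refine ContinuousOn.div (by fun_prop) (by fun_prop) fun x hx => ?_
    have := hpos x hx
    positivity
  have hcont' : ContinuousOn (fun γ : ℝ => (γ ^ 2)⁻¹) (Set.uIcc a b) :=
    ContinuousOn.inv₀ (by fun_prop) fun x hx => (pow_pos (hpos x hx) 2).ne'
  have hderiv : ∀ x ∈ Set.uIcc a b, HasDerivAt (fun γ : ℝ => -γ⁻¹) (x ^ 2)⁻¹ x := fun x hx =>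
    (hasDerivAt_inv (hpos x hx).ne').neg.congr_deriv (neg_neg _)
  have hle : ∀ x ∈ Set.Icc a b, 1 / (x ^ 2 * (1 + x) ^ 2) ≤ (x ^ 2)⁻¹ := fun x hx => by
    have hx0 : 0 < x := ha.trans_le hx.1
    rw [← one_div]
    refine one_div_le_one_div_of_le (by positivity) (le_mul_of_one_le_right (by positivity) ?_)
    nlinarith
  have h := intervalIntegral.integral_mono_on (μ := volume) hab hcont.intervalIntegrable
    hcont'.intervalIntegrable hle
  rw [intervalIntegral.integral_eq_sub_of_hasDerivAt hderiv hcont'.intervalIntegrable] at h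
  simp only [one_div] at h ⊢
  linarith

end Integration

/-- **Theorem 1 (D-bound, with power constraint).** If `(1/n)·E[‖X‖²] ≤ 1` and
`0 < snr ≤ snr0`, then `mmse(X, snr) ≤ mmse(X, snr0) + (n+2)·(1/snr − 1/snr0) − Δ`,
where `Δ = ∫_{snr}^{snr0} dγ/(γ²(1+γ)²)`, which equals the stated closed form, and `Δ ≥ 0`. -/
theorem dBound_with_power {Ω : Type*} [MeasurableSpace Ω] (μ : Measure Ω) [IsProbabilityMeasure μ]
    (n : ℕ) (hn : 1 ≤ n) (X Z : Ω → Fin n → ℝ)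
    (hX : Measurable X) (hZ : Measurable Z)
    (hZlaw : Measure.map Z μ = Measure.pi fun _ : Fin n => gaussianReal 0 1)
    (hindep : IndepFun X Z μ)
    (hX2 : Integrable (fun ω => ∑ i, (X ω i) ^ 2) μ)
    (hpow : (1 / (n : ℝ)) * ∫ ω, ∑ i, (X ω i) ^ 2 ∂μ ≤ 1)
    (snr snr0 : ℝ) (hsnr : 0 < snr) (hle : snr ≤ snr0)
    (Δ : ℝ) (hΔ : Δ = ∫ γ in snr..snr0, 1 / (γ ^ 2 * (1 + γ) ^ 2)) :
    mmseV μ X Z snr ≤ mmseV μ X Z snr0 + ((n : ℝ) + 2) * (1 / snr - 1 / snr0) - Δ ∧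
    Δ = 2 * Real.log ((1 + snr0) / (1 + snr)) - 2 * Real.log (snr0 / snr)
        + 1 / (1 + snr) - 1 / (1 + snr0) + 1 / snr - 1 / snr0 ∧
    0 ≤ Δ := by
  have hΔ0 : 0 ≤ Δ := hΔ ▸ intervalIntegral.integral_nonneg hle fun γ _ => by positivity
  refine ⟨?_, hΔ ▸ integral_one_div_sq_mul_sq hsnr hle, hΔ0⟩
  have hn' : (1 : ℝ) ≤ n := Nat.one_le_cast.2 hn
  have hΔle : Δ ≤ 1 / snr - 1 / snr0 := hΔ ▸ integral_one_div_sq_mul_sq_le hsnr hle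
  have h := mul_le_mul_of_nonneg_left (totalError_le hX hZ hZlaw hindep
    (memLp_two_of_integrable_sum_sq hX hX2) hsnr hle) (by positivity : 0 ≤ 1 / (n : ℝ))
  change 1 / (n : ℝ) * totalError μ X Z snr ≤ 1 / (n : ℝ) * totalError μ X Z snr0 + _ - _
  have e : 1 / (n : ℝ) * (2 / 3 * n * (n + 2) * (1 / snr - 1 / snr0)) =
      2 / 3 * (n + 2) * (1 / snr - 1 / snr0) := by
    field_simp
  rw [mul_add, e] at h
  have h1 : 0 ≤ ((n : ℝ) - 1) / 3 * (1 / snr - 1 / snr0) :=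
    mul_nonneg (by linarith) (hΔ0.trans hΔle)
  linarith

end
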